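/- Let R be a commutative ring, S a multiplicative subset of R, M an R-module, and M[x] = R[x] ⊗_R M the induced R[x]-module (the polynomial module over M). Then for every integer n ≥ 0: Ext^{n+1}_R(M, N) is uniformly S-torsion for every R-module N if and only if Ext^{n+1}_{R[x]}(M[x], N) is uniformly S-torsion for every R[x]-module N. (That is, S-pd_{R[x]}(M[x]) = S-pd_R(M).) -/

import Mathlib

open CategoryTheory TensorProduct

universe u

/-!
Since `R[x]` is flat over `R`, a projective resolution of `M` base changes to one of `M[x]`, and the
adjunction between base change and restriction of scalars turns this into an `R`-linear isomorphism
`Ext_{R[x]}(M[x], N) ≅ Ext_R(M, N)` for every `R[x]`-module `N`. So torsion on the `R`-side gives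
torsion on the `R[x]`-side. Conversely, an `R`-module `N` is a direct summand of `N[x]` (the
constant terms), hence `Ext_R(M, N)` is a direct summand of
`Ext_R(M, N[x]) ≅ Ext_{R[x]}(M[x], N[x])`. The same argument works over any flat
`R`-algebra `A` with an `R`-linear retraction `A → R`.
-/

universe v w

/-- Uniformly `S`-torsion modules: a single element of `S` annihilates the whole module. Here
`S` may be any set of scalars. -/
def IsUniformlyTorsion {R : Type*} [Semiring R] (S : Set R) (X : Type*) [AddCommMonoid X]
    [Module R X] : Prop :=
  ∃ s ∈ S, Module.IsTorsionBy R X s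

lemma IsUniformlyTorsion.of_surjective {R X Y : Type*} [Semiring R] [AddCommMonoid X]
    [AddCommMonoid Y] [Module R X] [Module R Y] {S : Set R} (h : IsUniformlyTorsion S X)
    (f : X →ₗ[R] Y) (hf : Function.Surjective f) : IsUniformlyTorsion S Y := by
  obtain ⟨s, hs, hX⟩ := h
  refine ⟨s, hs, fun y ↦ ?_⟩
  obtain ⟨x, rfl⟩ := hf y
  rw [← map_smul, @hX x, map_zero]

section Adjunction

variable {A B : Type*} [CommRing A] [CommRing B] (φ : A →+* B)
  {C D : Type*} [Category.{v} C] [Category.{v} D]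

/-- The bijection `Hom(F X, Y) ≃ Hom(X, G Y)` of an adjunction `F ⊣ G`, as an isomorphism of
`A`-modules when `G` is semilinear along `φ : A →+* B`. -/
noncomputable def adjunctionHomIso [Preadditive C] [Linear A C] [Preadditive D] [Linear B D]
    {F : C ⥤ D} {G : D ⥤ C} [F.Additive] (adj : F ⊣ G)
    (hG : ∀ (a : A) {Y Y' : D} (f : Y ⟶ Y'), G.map (φ a • f) = a • G.map f) (X : C) (Y : D) :
    (ModuleCat.restrictScalars φ).obj (ModuleCat.of B (F.obj X ⟶ Y)) ≅
      ModuleCat.of A (X ⟶ G.obj Y) :=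
  letI : Module A (F.obj X ⟶ Y) := .compHom _ φ
  LinearEquiv.toModuleIso
    { adj.homAddEquiv X Y with
      map_smul' a f := by
        change adj.homEquiv X Y (φ a • f) = a • adj.homEquiv X Y f
        simp only [adj.homEquiv_unit, hG, Linear.comp_smul] }

variable [Abelian C] [Linear A C] [Abelian D] [Linear B D]
  {F : C ⥤ D} {G : D ⥤ C} [F.Additive] (adj : F ⊣ G)
  (hG : ∀ (a : A) {Y Y' : D} (f : Y ⟶ Y'), G.map (φ a • f) = a • G.map f)

/-- The isomorphism of cochain complexes `Hom(F K, Y) ≅ Hom(K, G Y)` induced by `F ⊣ G`. -/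
noncomputable def linearYonedaObjAdjunctionIso {α : Type*} [AddRightCancelSemigroup α] [One α]
    (K : ChainComplex C α) (Y : D) :
    ((ModuleCat.restrictScalars φ).mapHomologicalComplex _).obj
        (ChainComplex.linearYonedaObj ((F.mapHomologicalComplex _).obj K) B Y) ≅
      K.linearYonedaObj A (G.obj Y) :=
  HomologicalComplex.Hom.isoOfComponents (fun i ↦ adjunctionHomIso φ adj hG (K.X i) Y)
    fun i j _ ↦ by
      ext f
      exact (adj.homEquiv_naturality_left (K.d j i) f).symm

/-- The isomorphism `Ext(F X, Y) ≅ Ext(X, G Y)` for an adjunction `F ⊣ G` of exact functors. -/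
noncomputable def extAdjunctionIso [EnoughProjectives C] [EnoughProjectives D]
    [F.PreservesHomology] [G.PreservesEpimorphisms] (X : C) (Y : D) (n : ℕ) :
    (ModuleCat.restrictScalars φ).obj (((Ext B D n).obj (Opposite.op (F.obj X))).obj Y) ≅
      ((Ext A C n).obj (Opposite.op X)).obj (G.obj Y) :=
  have := Functor.preservesProjectiveObjects_of_adjunction_of_preservesEpimorphisms adj
  let P := projectiveResolution X
  let FP := F.mapProjectiveResolution P
  (ModuleCat.restrictScalars φ).mapIso (FP.isoExt n Y) ≪≫
    (((FP.complex.linearYonedaObj B Y).sc n).mapHomologyIso (ModuleCat.restrictScalars φ)).symm ≪≫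
    HomologicalComplex.homologyMapIso (linearYonedaObjAdjunctionIso φ adj hG P.complex Y) n ≪≫
    (P.isoExt n (G.obj Y)).symm

end Adjunction

section BaseChange

variable {R : Type w} {A : Type u} [CommRing R] [CommRing A] [Algebra R A]

/-- Restricting scalars of an `A`-module along `R → A` gives back the `R`-module structure it
already carries. -/
noncomputable def restrictScalarsObjIso (N : Type*) [AddCommGroup N] [Module R N] [Module A N]
    [IsScalarTower R A N] :
    (ModuleCat.restrictScalars (algebraMap R A)).obj (ModuleCat.of A N) ≅ ModuleCat.of R N :=
  LinearEquiv.toModuleIso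
    (@AddEquiv.toLinearEquiv R N N _ _ _ (.compHom N (algebraMap R A)) _ (.refl N)
      (algebraMap_smul A))

/-- Mathlib's `extendScalars` tensors with `A` carrying the `R`-action restricted along
`algebraMap R A`, which agrees with the one of the algebra `A` only propositionally. -/
noncomputable def extendScalarsObjIso (M : ModuleCat.{v} R) :
    (ModuleCat.extendScalars (algebraMap R A)).obj M ≅ ModuleCat.of A (A ⊗[R] M) :=
  have : IsScalarTower R A ((ModuleCat.restrictScalars (algebraMap R A)).obj (ModuleCat.of A A)) :=
    .of_algebraMap_smul fun _ _ ↦ rfl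
  LinearEquiv.toModuleIso (X₁ := (ModuleCat.extendScalars (algebraMap R A)).obj M) <|
    TensorProduct.AlgebraTensorModule.congr
      (M := (ModuleCat.restrictScalars (algebraMap R A)).obj (ModuleCat.of A A))
      (LinearEquiv.refl A A) (LinearEquiv.refl R M)

/-- An `R`-linear retraction `ρ` of `R → A` makes every `R`-module `N` a retract of `A ⊗[R] N`. -/
noncomputable def retractTensorProduct (ρ : A →ₗ[R] R) (hρ : ρ 1 = 1) (N : Type u)
    [AddCommGroup N] [Module R N] :
    Retract (ModuleCat.of R N) (ModuleCat.of R (A ⊗[R] N)) where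
  i := ModuleCat.ofHom (TensorProduct.mk R A N 1)
  r := ModuleCat.ofHom ((TensorProduct.lid R N).toLinearMap ∘ₗ ρ.rTensor N)
  retract := by
    ext n
    simp [hρ]

end BaseChange

section Ext

variable {R A : Type u} [CommRing R] [CommRing A] [Algebra R A] [Module.Flat R A]

/-- Flat base change for `Ext`: the isomorphism `Ext_A(A ⊗[R] M, N) ≅ Ext_R(M, N)` of
`R`-modules. -/
noncomputable def extBaseChangeIso (M : ModuleCat.{u} R) (N : ModuleCat.{u} A) (n : ℕ) :
    (ModuleCat.restrictScalars (algebraMap R A)).obj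
        (((Ext A (ModuleCat.{u} A) n).obj (Opposite.op (ModuleCat.of A (A ⊗[R] M)))).obj N) ≅
      ((Ext R (ModuleCat.{u} R) n).obj (Opposite.op M)).obj
        ((ModuleCat.restrictScalars (algebraMap R A)).obj N) :=
  let adj := ModuleCat.extendRestrictScalarsAdj.{u} (algebraMap R A)
  have := adj.left_adjoint_additive
  have := ModuleCat.preservesFiniteLimits_extendScalars_of_flat
    (RingHom.flat_algebraMap_iff.2 ‹Module.Flat R A›)
  (ModuleCat.restrictScalars (algebraMap R A)).mapIso
      (((Ext A (ModuleCat.{u} A) n).mapIso (extendScalarsObjIso M).op).app N) ≪≫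
    extAdjunctionIso (algebraMap R A) adj (fun _ _ _ _ ↦ rfl) M N n

theorem stmt18_general (ρ : A →ₗ[R] R) (hρ : ρ 1 = 1) (S : Set R) (M : Type u) [AddCommGroup M]
    [Module R M] (n : ℕ) :
    (∀ N : ModuleCat.{u} R, IsUniformlyTorsion S
        (((Ext R (ModuleCat.{u} R) n).obj (Opposite.op (ModuleCat.of R M))).obj N)) ↔
      ∀ N : ModuleCat.{u} A, IsUniformlyTorsion S
        ((ModuleCat.restrictScalars (algebraMap R A)).obj
          (((Ext A (ModuleCat.{u} A) n).obj
            (Opposite.op (ModuleCat.of A (A ⊗[R] M)))).obj N)) := by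
  let E := (Ext R (ModuleCat.{u} R) n).obj (Opposite.op (ModuleCat.of R M))
  let res := ModuleCat.restrictScalars.{u} (algebraMap R A)
  let e (N : ModuleCat.{u} A) := (extBaseChangeIso (ModuleCat.of R M) N n).toLinearEquiv
  refine ⟨fun h N ↦ (h (res.obj N)).of_surjective _ (e N).symm.surjective, fun h N ↦ ?_⟩
  let N' := ModuleCat.of A (A ⊗[R] N)
  have hN' : IsUniformlyTorsion S (E.obj (res.obj N')) :=
    (h N').of_surjective _ (e N').surjective
  let retract : Retract N (res.obj N') :=
    (retractTensorProduct ρ hρ N).trans (.ofIso (restrictScalarsObjIso _).symm)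
  exact hN'.of_surjective (E.map retract.r).hom ((ModuleCat.epi_iff_surjective _).1 inferInstance)

end Ext

/-- For an `R`-module `M` and the induced `R[x]`-module `M[x] = R[x] ⊗_R M`:
`Ext^{n+1}_R(M, -)` is uniformly `S`-torsion iff `Ext^{n+1}_{R[x]}(M[x], -)` is uniformly
`S`-torsion (with `S ⊆ R` viewed in `R[x]` via the constant embedding).
That is, `S`-pd_{R[x]}(M[x]) = `S`-pd_R(M). -/
theorem stmt18 {R : Type u} [CommRing R] (S : Submonoid R)
    (M : Type u) [AddCommGroup M] [Module R M] (n : ℕ) :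
    (∀ N : ModuleCat.{u} R, ∃ s ∈ S,
        ∀ x : ((Ext R (ModuleCat.{u} R) (n + 1)).obj
            (Opposite.op (ModuleCat.of R M))).obj N,
          s • x = 0) ↔
      (∀ N : ModuleCat.{u} (Polynomial R), ∃ s ∈ S,
        ∀ x : ((Ext (Polynomial R) (ModuleCat.{u} (Polynomial R)) (n + 1)).obj
            (Opposite.op (ModuleCat.of (Polynomial R) (Polynomial R ⊗[R] M)))).obj N,
          (Polynomial.C s : Polynomial R) • x = 0) :=
  stmt18_general (Polynomial.lcoeff R 0) (by simp) (S : Set R) M (n + 1)
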